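/- Let v₃ = log 3 / log 2 and for real θ define f(θ) = ∑_{α=0}^{∞} (−1)^{α + ⌊θ − v₃·α⌋} · 3^{−(v₃−1)·α − {θ − v₃·α}}, where {·} denotes the fractional part. Then for every real z ≥ 1, |∑_{(α₁,α₂) ∈ ℕ², 2^{α₁}·3^{α₂} ≤ z} (−3)^{α₁+α₂} − (3/4)·z^{v₃}·f(log z / log 2)| ≤ z. -/

import Mathlib

open Finset Real

/-- `f θ = ∑_{α ≥ 0} (-1)^{α + ⌊θ - v₃ α⌋} 3^{-(v₃-1)α - {θ - v₃ α}}` where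
`v₃ = log 3 / log 2`. -/
noncomputable def fOsc (θ : ℝ) : ℝ :=
  ∑' α : ℕ, (-1 : ℝ) ^ ((α : ℤ) + ⌊θ - (Real.log 3 / Real.log 2) * α⌋) *
    (3 : ℝ) ^ (-(Real.log 3 / Real.log 2 - 1) * α - Int.fract (θ - (Real.log 3 / Real.log 2) * α))

/-- Partial sums of the slowly decreasing alternating exponent sequence. -/
lemma alt_bound (M : ℕ) : ∀ e : ℕ → ℤ,
    (∀ j, e (j + 1) = e j ∨ e (j + 1) = e j - 1) → (∀ j, e (j + 2) ≤ e j - 1) →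
    ∃ S : ℝ, 0 ≤ S ∧ S ≤ 2 ∧ ∑ j ∈ Finset.range M, (-3 : ℝ) ^ (e j) = (-3 : ℝ) ^ (e 0) * S := by
  induction M using Nat.strong_induction_on with
  | _ M ih =>
    intro e h1 h2
    have h3 : (-3 : ℝ) ≠ 0 := by norm_num
    rcases M with _ | _ | M
    · exact ⟨0, by norm_num, by norm_num, by simp⟩
    · exact ⟨1, by norm_num, by norm_num, by simp⟩
    · rcases h1 0 with h | h
      · obtain ⟨S, hS0, hS2, hS⟩ := ih M (by omega) (fun j => e (j + 2))
          (fun j => h1 (j + 2)) (fun j => h2 (j + 2))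
        have h4 : e 2 = e 0 - 1 := by
          have a := h1 1
          have b := h2 0
          simp only [zero_add, Nat.reduceAdd] at a b h
          omega
        refine ⟨2 - S / 3, by linarith, by linarith, ?_⟩
        rw [Finset.sum_range_succ', Finset.sum_range_succ']
        simp only [zero_add, add_assoc, Nat.reduceAdd] at hS h ⊢
        rw [hS, h4, h, zpow_sub_one₀ h3]
        ring
      · obtain ⟨S, hS0, hS2, hS⟩ := ih (M + 1) (by omega) (fun j => e (j + 1))
          (fun j => h1 (j + 1)) (fun j => h2 (j + 1))
        refine ⟨1 - S / 3, by linarith, by linarith, ?_⟩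
        rw [Finset.sum_range_succ']
        simp only [zero_add] at hS h ⊢
        rw [hS, h, zpow_sub_one₀ h3]
        ring

lemma log_ratio_bounds : 3 / 2 ≤ Real.log 3 / Real.log 2 ∧ Real.log 3 / Real.log 2 ≤ 2 := by
  have h2 : 0 < Real.log 2 := Real.log_pos (by norm_num)
  constructor
  · rw [le_div_iff₀ h2]
    have : Real.log (2 ^ 3) ≤ Real.log (3 ^ 2) := Real.log_le_log (by norm_num) (by norm_num)
    rw [Real.log_pow, Real.log_pow] at this
    push_cast at this
    linarith
  · rw [div_le_iff₀ h2]
    have : Real.log 3 ≤ Real.log (2 ^ 2) := Real.log_le_log (by norm_num) (by norm_num)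
    rw [Real.log_pow] at this
    push_cast at this
    linarith

/-- Each term of the series, multiplied by `z ^ v₃`, is an integer power of `-3`. -/
lemma term_eq (z : ℝ) (hz : 1 ≤ z) (v : ℝ) (hv : v = Real.log 3 / Real.log 2) (α : ℕ) :
    z ^ v * ((-1 : ℝ) ^ ((α : ℤ) + ⌊Real.log z / Real.log 2 - v * α⌋) *
      (3 : ℝ) ^ (-(v - 1) * α - Int.fract (Real.log z / Real.log 2 - v * α))) =
    (-3 : ℝ) ^ ((α : ℤ) + ⌊Real.log z / Real.log 2 - v * α⌋) := by
  have h2 : 0 < Real.log 2 := Real.log_pos (by norm_num)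
  have hzv : z ^ v = (3 : ℝ) ^ (Real.log z / Real.log 2) := by
    rw [Real.rpow_def_of_pos (by linarith), Real.rpow_def_of_pos (by norm_num), hv]
    congr 1
    ring
  rw [hzv, mul_left_comm, ← Real.rpow_add (by norm_num)]
  have : Real.log z / Real.log 2 + (-(v - 1) * α - Int.fract (Real.log z / Real.log 2 - v * α))
      = (((α : ℤ) + ⌊Real.log z / Real.log 2 - v * α⌋ : ℤ) : ℝ) := by
    rw [Int.fract]
    push_cast
    ring
  rw [this, Real.rpow_intCast, ← mul_zpow]
  norm_num

lemma term_summable (θ v : ℝ) (hv : 3 / 2 ≤ v) :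
    Summable (fun α : ℕ => (-1 : ℝ) ^ ((α : ℤ) + ⌊θ - v * α⌋) *
      (3 : ℝ) ^ (-(v - 1) * α - Int.fract (θ - v * α))) := by
  have hg : Summable (fun α : ℕ => ((3 : ℝ) ^ (-(v - 1))) ^ α) := by
    apply summable_geometric_of_lt_one (by positivity)
    apply Real.rpow_lt_one_of_one_lt_of_neg (by norm_num) (by linarith)
  refine Summable.of_norm_bounded hg (fun α => ?_)
  rw [norm_mul, norm_zpow, norm_neg, norm_one, one_zpow, one_mul, Real.norm_of_nonneg (by positivity),
    ← Real.rpow_natCast, ← Real.rpow_mul (by norm_num)]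
  apply Real.rpow_le_rpow_of_exponent_le (by norm_num)
  have := Int.fract_nonneg (θ - v * α)
  linarith

lemma cond_iff (z : ℝ) (hz : 1 ≤ z) (a b : ℕ) : ((2 ^ a * 3 ^ b : ℕ) : ℝ) ≤ z ↔
    (a : ℝ) + Real.log 3 / Real.log 2 * b ≤ Real.log z / Real.log 2 := by
  have h2 : 0 < Real.log 2 := Real.log_pos (by norm_num)
  rw [← Real.log_le_log_iff (by positivity) (by linarith)]
  push_cast
  rw [Real.log_mul (by positivity) (by positivity), Real.log_pow, Real.log_pow, le_div_iff₀ h2]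
  have : ((a : ℝ) + Real.log 3 / Real.log 2 * b) * Real.log 2 = a * Real.log 2 + b * Real.log 3 := by
    field_simp
  rw [this]

lemma inner_alt_sum (b n : ℕ) : ∑ a ∈ Finset.range (n + 1), (-3 : ℝ) ^ (a + b) =
    (-3) ^ b / 4 + 3 / 4 * (-3) ^ (b + n) := by
  induction n with
  | zero => simp; ring
  | succ n ih => rw [Finset.sum_range_succ, ih]; ring

lemma geom_alt (K : ℕ) : ∑ b ∈ Finset.range (K + 1), (-3 : ℝ) ^ b / 4 =
    (1 + 3 * (-3) ^ K) / 16 := by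
  induction K with
  | zero => simp; norm_num
  | succ n ih => rw [Finset.sum_range_succ, ih]; ring

theorem sum_pow_two_three_approx (z : ℝ) (hz : 1 ≤ z) :
    |(∑ q ∈ (Finset.range (⌊z⌋₊ + 1) ×ˢ Finset.range (⌊z⌋₊ + 1)).filter
          (fun q => ((2 ^ q.1 * 3 ^ q.2 : ℕ) : ℝ) ≤ z),
        (-3 : ℝ) ^ (q.1 + q.2)) -
      3 / 4 * z ^ (Real.log 3 / Real.log 2) * fOsc (Real.log z / Real.log 2)| ≤ z := by
  obtain ⟨hv1, hv2⟩ := log_ratio_bounds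
  have hl2 : 0 < Real.log 2 := Real.log_pos (by norm_num)
  have hcond := cond_iff z hz
  have hterm := term_eq z hz _ rfl
  have hsum := term_summable (Real.log z / Real.log 2) _ hv1
  have hθ0 : 0 ≤ Real.log z / Real.log 2 := div_nonneg (Real.log_nonneg hz) hl2.le
  have hbig : ∀ K : ℕ, Real.log 3 / Real.log 2 * (K + 1) - 1 ≤ Real.log z / Real.log 2 →
      (3 : ℝ) ^ K * 3 ≤ 2 * z := by
    intro K h
    rw [← Real.log_le_log_iff (by positivity) (by linarith), Real.log_mul (by positivity) (by positivity),
      Real.log_mul (by positivity) (by positivity), Real.log_pow]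
    have h' := mul_le_mul_of_nonneg_right h hl2.le
    have e1 : (Real.log 3 / Real.log 2 * (K + 1) - 1) * Real.log 2
        = Real.log 3 * (K + 1) - Real.log 2 := by field_simp
    rw [e1, div_mul_cancel₀ _ hl2.ne'] at h'
    linarith
  unfold fOsc
  generalize hv : Real.log 3 / Real.log 2 = v at *
  generalize hθ : Real.log z / Real.log 2 = θ at *
  have hvpos : 0 < v := by linarith
  obtain ⟨K, hK1, hK2⟩ : ∃ K : ℕ, v * K ≤ θ ∧ θ < v * (K + 1) := by
    refine ⟨⌊θ / v⌋₊, ?_, ?_⟩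
    · have := Nat.floor_le (div_nonneg hθ0 hvpos.le)
      rw [le_div_iff₀ hvpos] at this
      linarith
    · have := Nat.lt_floor_add_one (θ / v)
      rw [div_lt_iff₀ hvpos] at this
      linarith
  have hfl : ∀ b : ℕ, b < K + 1 → 0 ≤ ⌊θ - v * b⌋ := by
    intro b hb
    apply Int.floor_nonneg.2
    have : (b : ℝ) ≤ K := by exact_mod_cast Nat.lt_succ_iff.1 hb
    nlinarith
  -- the finite double sum
  have hA : (∑ q ∈ (Finset.range (⌊z⌋₊ + 1) ×ˢ Finset.range (⌊z⌋₊ + 1)).filter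
          (fun q => ((2 ^ q.1 * 3 ^ q.2 : ℕ) : ℝ) ≤ z), (-3 : ℝ) ^ (q.1 + q.2)) =
      (1 + 3 * (-3) ^ K) / 16 +
        3 / 4 * ∑ b ∈ Finset.range (K + 1), (-3 : ℝ) ^ ((b : ℤ) + ⌊θ - v * b⌋) := by
    rw [Finset.sum_finset_product_right _ (Finset.range (K + 1))
      (fun b => Finset.range (⌊θ - v * b⌋.toNat + 1)), ← geom_alt, Finset.mul_sum,
      ← Finset.sum_add_distrib]
    · apply Finset.sum_congr rfl
      intro b hb
      have h0 := hfl b (Finset.mem_range.1 hb)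
      rw [inner_alt_sum, ← zpow_natCast (-3 : ℝ) (b + _)]
      push_cast
      rw [Int.toNat_of_nonneg h0]
    · rintro ⟨a, b⟩
      simp only [Finset.mem_filter, Finset.mem_product, Finset.mem_range]
      rw [hcond]
      constructor
      · rintro ⟨-, h⟩
        have hb : b < K + 1 := by
          have : (b : ℝ) < K + 1 := by
            have : (0 : ℝ) ≤ a := Nat.cast_nonneg a
            by_contra hc
            push Not at hc
            nlinarith
          exact_mod_cast this
        refine ⟨hb, ?_⟩
        have : (a : ℤ) ≤ ⌊θ - v * b⌋ := Int.le_floor.2 (by push_cast; linarith)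
        omega
      · rintro ⟨hb, ha⟩
        have h0 := hfl b hb
        have h1 : (a : ℤ) ≤ ⌊θ - v * b⌋ := by omega
        have h2 := Int.le_floor.1 h1
        push_cast at h2
        have h3 : (a : ℝ) + v * b ≤ θ := by linarith
        have h4 := (hcond a b).2 h3
        have h5 : 2 ^ a * 3 ^ b ≤ ⌊z⌋₊ := Nat.le_floor h4
        have h6 : a < 2 ^ a := Nat.lt_two_pow_self
        have h7 : b < 3 ^ b := Nat.lt_pow_self (by norm_num)
        have h8 : 2 ^ a ≤ 2 ^ a * 3 ^ b := Nat.le_mul_of_pos_right _ (by positivity)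
        have h9 : 3 ^ b ≤ 2 ^ a * 3 ^ b := Nat.le_mul_of_pos_left _ (by positivity)
        exact ⟨⟨by omega, by omega⟩, h3⟩
  -- bound for partial sums
  have hpart : ∀ M : ℕ, |((1 + 3 * (-3 : ℝ) ^ K) / 16 +
        3 / 4 * ∑ b ∈ Finset.range (K + 1), (-3 : ℝ) ^ ((b : ℤ) + ⌊θ - v * b⌋)) -
      3 / 4 * ∑ b ∈ Finset.range (M + (K + 1)), (-3 : ℝ) ^ ((b : ℤ) + ⌊θ - v * b⌋)| ≤ z := by
    intro M
    obtain ⟨S, hS0, hS2, hS⟩ := alt_bound M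
      (fun j => ((K + 1 + j : ℕ) : ℤ) + ⌊θ - v * ((K + 1 + j : ℕ) : ℝ)⌋) (by
        intro j
        have a1 := Int.floor_le (θ - v * ((K + 1 + j : ℕ) : ℝ))
        have a2 := Int.lt_floor_add_one (θ - v * ((K + 1 + j : ℕ) : ℝ))
        have b1 := Int.floor_le (θ - v * ((K + 1 + (j + 1) : ℕ) : ℝ))
        have b2 := Int.lt_floor_add_one (θ - v * ((K + 1 + (j + 1) : ℕ) : ℝ))
        have c : θ - v * ((K + 1 + (j + 1) : ℕ) : ℝ) = θ - v * ((K + 1 + j : ℕ) : ℝ) - v := by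
          push_cast; ring
        generalize ⌊θ - v * ((K + 1 + j : ℕ) : ℝ)⌋ = m at *
        generalize ⌊θ - v * ((K + 1 + (j + 1) : ℕ) : ℝ)⌋ = n at *
        have d1 : n < m := by
          have : (n : ℝ) < m := by linarith
          exact_mod_cast this
        have d2 : m < n + 3 := by
          have : (m : ℝ) < n + 3 := by linarith
          exact_mod_cast this
        push_cast
        omega) (by
        intro j
        have a2 := Int.lt_floor_add_one (θ - v * ((K + 1 + j : ℕ) : ℝ))
        have b1 := Int.floor_le (θ - v * ((K + 1 + (j + 2) : ℕ) : ℝ))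
        have c : θ - v * ((K + 1 + (j + 2) : ℕ) : ℝ) = θ - v * ((K + 1 + j : ℕ) : ℝ) - 2 * v := by
          push_cast; ring
        generalize ⌊θ - v * ((K + 1 + j : ℕ) : ℝ)⌋ = m at *
        generalize ⌊θ - v * ((K + 1 + (j + 2) : ℕ) : ℝ)⌋ = n at *
        have d1 : n + 2 < m := by
          have : (n : ℝ) + 2 < m := by linarith
          exact_mod_cast this
        push_cast
        omega)
    rw [add_comm M, Finset.sum_range_add _ (K + 1) M, hS]
    simp only [add_zero]
    have hy1 : (1 : ℝ) ≤ 3 ^ K := one_le_pow₀ (by norm_num)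
    have hyz : (3 : ℝ) ^ K ≤ z := by
      have := (hcond 0 K).2 (by push_cast; linarith)
      simpa using this
    have hw : (-3 : ℝ) ^ K = 3 ^ K ∨ (-3 : ℝ) ^ K = -3 ^ K := by
      rcases Nat.even_or_odd K with h | h
      · left; exact h.neg_pow _
      · right; exact h.neg_pow _
    have hyS0 : 0 ≤ (3 : ℝ) ^ K * S := by positivity
    have hyS2 : (3 : ℝ) ^ K * S ≤ 2 * 3 ^ K := by nlinarith
    have hn : ⌊θ - v * ((K + 1 : ℕ) : ℝ)⌋ = -1 ∨ ⌊θ - v * ((K + 1 : ℕ) : ℝ)⌋ = -2 := by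
      have a1 := Int.floor_le (θ - v * ((K + 1 : ℕ) : ℝ))
      have a2 := Int.lt_floor_add_one (θ - v * ((K + 1 : ℕ) : ℝ))
      generalize ⌊θ - v * ((K + 1 : ℕ) : ℝ)⌋ = m at *
      push_cast at a1 a2
      have d1 : m < 0 := by
        have : (m : ℝ) < 0 := by linarith
        exact_mod_cast this
      have d2 : -3 < m := by
        have : (-3 : ℝ) < m := by linarith
        exact_mod_cast this
      omega
    rcases hn with hn | hn
    · have hzz : (3 : ℝ) ^ K * 3 ≤ 2 * z := by
        apply hbig
        have a1 := Int.floor_le (θ - v * ((K + 1 : ℕ) : ℝ))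
        rw [hn] at a1
        push_cast at a1
        linarith
      have he : ((K + 1 : ℕ) : ℤ) + -1 = (K : ℤ) := by push_cast; ring
      rw [hn, he, zpow_natCast, abs_le]
      rcases hw with hw | hw <;> rw [hw] <;> constructor <;> linarith
    · have he : ((K + 1 : ℕ) : ℤ) + -2 = (K : ℤ) - 1 := by push_cast; ring
      rw [hn, he, zpow_sub_one₀ (by norm_num), zpow_natCast, abs_le]
      rcases hw with hw | hw <;> rw [hw] <;> constructor <;> linarith
  rw [hA, mul_assoc, ← tsum_mul_left]
  have hs2 := (hsum.mul_left (z ^ v)).hasSum.tendsto_sum_nat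
  simp only [hterm] at hs2 ⊢
  have hs3 := (Filter.tendsto_add_atTop_iff_nat (K + 1)).2 hs2
  exact le_of_tendsto ((hs3.const_mul (3 / 4)).const_sub _).abs (Filter.Eventually.of_forall hpart)
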